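/- In the symmetric group S_n (for n ≥ 2), the number of (n−1)-tuples (t_1, …, t_{n−1}) of transpositions such that t_1 t_2 ⋯ t_{n−1} equals the long cycle (1 2 ⋯ n) is exactly n^{n−2}. -/

import Mathlib

open scoped Classical

/-!
Multiplying a permutation by a transposition `(a b)` whose points lie in different cycles merges
those two cycles, and otherwise the number of cycles does not drop. Hence, if `f` has `m + 1` cycles
on `n` points, every one of the `m` transpositions completing `f` to a full cycle must merge two
cycles. Choosing the first one and using induction on `m`, the number of completions is
`m! * n ^ (m - 1) * ∏ |C|`, the product running over the cycles `C` of `f`: merging `A` and `B`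
multiplies the product by `1 / |A| + 1 / |B|`, and these factors add up to `n * m` over all
unordered pairs `{a, b}` lying in different cycles. For `f = 1` this counts the
`(n - 1)`-tuples of transpositions whose product is a full cycle as `(n - 1)! * n ^ (n - 2)`, and
the `(n - 1)!` full cycles, being conjugate, have equally many factorizations.
-/

open Finset Equiv Equiv.Perm
open scoped Nat

section MergeClasses

variable {α : Type*}

/-- The smallest equivalence relation containing `r` and relating `a` to `b`: the classes of `a` and
`b` become one class and all other classes are kept. -/
def mergeClasses (r : Setoid α) (a b : α) : Setoid α where
  r x y := r x y ∨ (r a x ∨ r b x) ∧ (r a y ∨ r b y)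
  iseqv :=
    { refl := fun x => .inl (r.refl x)
      symm := Or.imp r.symm And.symm
      trans := by
        have extend {x y : α} (hxy : r x y) : r a x ∨ r b x → r a y ∨ r b y :=
          Or.imp (r.trans · hxy) (r.trans · hxy)
        rintro x y z (hxy | ⟨hx, hy⟩) (hyz | ⟨hy', hz⟩)
        · exact .inl (r.trans hxy hyz)
        · exact .inr ⟨extend (r.symm hxy) hy', hz⟩
        · exact .inr ⟨hx, extend hyz hy⟩
        · exact .inr ⟨hx, hz⟩ }

theorem mergeClasses_apply {r : Setoid α} {a b x y : α} :
    mergeClasses r a b x y ↔ r x y ∨ (r a x ∨ r b x) ∧ (r a y ∨ r b y) :=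
  Iff.rfl

theorem mergeClasses_le_iff {r s : Setoid α} {a b : α} :
    mergeClasses r a b ≤ s ↔ r ≤ s ∧ s a b := by
  constructor
  · intro h
    exact ⟨fun x y hxy => h (.inl hxy), h (.inr ⟨.inl (r.refl a), .inr (r.refl b)⟩)⟩
  · rintro ⟨hrs, hab⟩ x y (hxy | ⟨hx, hy⟩)
    · exact hrs hxy
    · have related {z : α} (hz : r a z ∨ r b z) : s a z :=
        hz.elim (hrs ·) fun hbz => s.trans hab (hrs hbz)
      exact s.trans (s.symm (related hx)) (related hy)

end MergeClasses

section SameCycle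

variable {α : Type*}

theorem sameCycleSetoid_le_iff {f : Perm α} {r : Setoid α} :
    SameCycle.setoid f ≤ r ↔ ∀ x, r x (f x) := by
  refine ⟨fun h x => h (sameCycle_apply_right.2 (.refl f x)), ?_⟩
  rintro h x _ ⟨i, rfl⟩
  induction i with
  | zero => exact r.refl x
  | succ i ih =>
    rw [add_comm, zpow_add, zpow_one, mul_apply]
    exact r.trans ih (h _)
  | pred i ih =>
    refine r.trans ih (r.symm ?_)
    simpa [← mul_apply, ← zpow_one_add] using h ((f ^ (-(i : ℤ) - 1)) x)

theorem isCycleOn_univ_iff {f : Perm α} :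
    f.IsCycleOn Set.univ ↔ SameCycle.setoid f = ⊤ := by
  simp only [IsCycleOn, Set.bijOn_univ, f.bijective, true_and, Set.mem_univ, true_implies,
    Setoid.eq_top_iff]
  rfl

variable [DecidableEq α]

theorem sameCycleSetoid_mul_swap_le (f : Perm α) (a b : α) :
    SameCycle.setoid (f * swap a b) ≤ mergeClasses (SameCycle.setoid f) a b := by
  have hle := mergeClasses_le_iff.1 (le_refl (mergeClasses (SameCycle.setoid f) a b))
  have hf := sameCycleSetoid_le_iff.1 hle.1
  refine sameCycleSetoid_le_iff.2 fun x => Setoid.trans' _ ?_ (hf (swap a b x))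
  rcases eq_or_ne x a with rfl | hxa
  · simpa using hle.2
  rcases eq_or_ne x b with rfl | hxb
  · simpa using Setoid.symm' _ hle.2
  · rw [swap_apply_of_ne_of_ne hxa hxb]

theorem sameCycle_mul_swap_self [Finite α] {f : Perm α} {a b : α} (hab : ¬ f.SameCycle a b) :
    (f * swap a b).SameCycle a b := by
  by_contra hcon
  -- Otherwise the orbit of `a` under `f * swap a b` follows the `f`-orbit of `f b` forever.
  have follow (i : ℕ) : (f * swap a b).SameCycle a ((f ^ i) (f b)) := by
    induction i with
    | zero => exact ⟨1, by simp⟩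
    | succ i ih =>
      have ha : (f ^ i) (f b) ≠ a := fun h =>
        hab (SameCycle.symm ⟨(i + 1 : ℕ), by rw [zpow_natCast, pow_succ, mul_apply, h]⟩)
      have hb : (f ^ i) (f b) ≠ b := fun h => hcon (by rwa [h] at ih)
      have hnext := ih.apply_right
      rwa [mul_apply, swap_apply_of_ne_of_ne ha hb, ← mul_apply, ← pow_succ'] at hnext
  obtain ⟨i, hi⟩ := (sameCycle_apply_left.2 (SameCycle.refl f b)).exists_nat_pow_eq
  have hb := follow i
  rw [hi] at hb
  exact hcon hb

theorem sameCycleSetoid_mul_swap [Finite α] {f : Perm α} {a b : α} (hab : ¬ f.SameCycle a b) :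
    SameCycle.setoid (f * swap a b) = mergeClasses (SameCycle.setoid f) a b := by
  have hmerge := sameCycle_mul_swap_self hab
  refine (sameCycleSetoid_mul_swap_le f a b).antisymm
    (mergeClasses_le_iff.2 ⟨sameCycleSetoid_le_iff.2 fun x => ?_, hmerge⟩)
  have hstep : (f * swap a b).SameCycle (swap a b x) (f x) := ⟨1, by simp⟩
  refine SameCycle.trans ?_ hstep
  rcases eq_or_ne x a with rfl | hxa
  · simpa using hmerge
  rcases eq_or_ne x b with rfl | hxb
  · simpa using hmerge.symm
  · rw [swap_apply_of_ne_of_ne hxa hxb]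

theorem sameCycleSetoid_mul_swap_le_of_sameCycle {f : Perm α} {a b : α} (hab : f.SameCycle a b) :
    SameCycle.setoid (f * swap a b) ≤ SameCycle.setoid f :=
  (sameCycleSetoid_mul_swap_le f a b).trans (mergeClasses_le_iff.2 ⟨le_rfl, hab⟩)

end SameCycle

section Finpartition

variable {α K : Type*} [DecidableEq α] {s : Finset α}

theorem sum_eq_sum_parts_sum {M : Type*} [AddCommMonoid M] (P : Finpartition s) (F : α → M) :
    ∑ x ∈ s, F x = ∑ c ∈ P.parts, ∑ x ∈ c, F x := by
  conv_lhs => rw [← P.biUnion_parts]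
  exact sum_biUnion P.disjoint

theorem card_part_ne_zero [AddMonoidWithOne K] [CharZero K] (P : Finpartition s) {x : α}
    (hx : x ∈ s) : (#(P.part x) : K) ≠ 0 :=
  Nat.cast_ne_zero.2 (card_ne_zero_of_mem (P.mem_part_self.2 hx))

theorem mem_part_comm (P : Finpartition s) {x y : α} : x ∈ P.part y ↔ y ∈ P.part x := by
  simp only [P.mem_part_iff_exists, and_comm]

variable [Field K] [CharZero K]

theorem sum_inv_card_part (P : Finpartition s) :
    ∑ x ∈ s, (#(P.part x) : K)⁻¹ = #P.parts := by
  have hpart : ∀ c ∈ P.parts, ∑ x ∈ c, (#(P.part x) : K)⁻¹ = 1 := by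
    intro c hc
    have hc₀ : (#c : K) ≠ 0 := Nat.cast_ne_zero.2 (card_ne_zero.2 (P.nonempty_of_mem_parts hc))
    rw [sum_congr rfl fun x hx => by rw [P.part_eq_of_mem hc hx], sum_const, nsmul_eq_mul,
      mul_inv_cancel₀ hc₀]
  rw [sum_eq_sum_parts_sum P, sum_congr rfl hpart, sum_const, nsmul_one]

theorem sum_sum_sdiff_part_inv (P : Finpartition s) :
    ∑ a ∈ s, ∑ _b ∈ s \ P.part a, (#(P.part a) : K)⁻¹ = #s * (#P.parts - 1) := by
  have hrow : ∀ a ∈ s, ∑ _b ∈ s \ P.part a, (#(P.part a) : K)⁻¹ =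
      #s * (#(P.part a) : K)⁻¹ - 1 := by
    intro a ha
    rw [sum_const, nsmul_eq_mul, cast_card_sdiff (P.part_subset a), sub_mul,
      mul_inv_cancel₀ (card_part_ne_zero P ha)]
  rw [sum_congr rfl hrow, sum_sub_distrib, ← mul_sum, sum_inv_card_part, sum_const, nsmul_one]
  ring

theorem sum_sum_sdiff_part_inv_add_inv (P : Finpartition s) :
    ∑ a ∈ s, ∑ b ∈ s \ P.part a, ((#(P.part a) : K)⁻¹ + (#(P.part b) : K)⁻¹) =
      2 * (#s * (#P.parts - 1)) := by
  have hswap : ∑ a ∈ s, ∑ b ∈ s \ P.part a, (#(P.part b) : K)⁻¹ =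
      ∑ b ∈ s, ∑ _a ∈ s \ P.part b, (#(P.part b) : K)⁻¹ :=
    sum_comm' fun a b => by simp only [mem_sdiff, mem_part_comm P (x := b)]; tauto
  simp only [sum_add_distrib]
  rw [hswap, sum_sum_sdiff_part_inv]
  ring

end Finpartition

section ClassPartition

variable {α : Type*} [Fintype α] [DecidableEq α] {r : Setoid α} {a b x y : α}

/-- The partition of a finite type into the classes of `r`; this is `Finpartition.ofSetoid` with
the relation decided classically, so that equal setoids can be rewritten inside it. -/
noncomputable def classPartition (r : Setoid α) : Finpartition (univ : Finset α) :=
  Finpartition.ofSetoid r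

theorem mem_part_classPartition : y ∈ (classPartition r).part x ↔ r x y :=
  Finpartition.mem_part_ofSetoid_iff_rel

theorem mem_parts_classPartition {c : Finset α} :
    c ∈ (classPartition r).parts ↔ ∃ x, (classPartition r).part x = c := by
  constructor
  · intro hc
    obtain ⟨x, -, hx⟩ := (classPartition r).part_surjOn hc
    exact ⟨x, hx⟩
  · rintro ⟨x, rfl⟩
    exact (classPartition r).part_mem.2 (mem_univ x)

theorem part_classPartition_eq_iff :
    (classPartition r).part x = (classPartition r).part y ↔ r x y := by
  rw [← mem_part_classPartition, mem_part_comm,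
    Finpartition.mem_part_iff_part_eq_part _ (mem_univ x) (mem_univ y)]

theorem card_parts_classPartition_anti {r s : Setoid α} (h : r ≤ s) :
    #(classPartition s).parts ≤ #(classPartition r).parts := by
  refine Finpartition.card_mono fun c hc => ?_
  obtain ⟨x, rfl⟩ := mem_parts_classPartition.1 hc
  refine ⟨_, (classPartition s).part_mem.2 (mem_univ x), fun y hy => ?_⟩
  exact mem_part_classPartition.2 (h (mem_part_classPartition.1 hy))

theorem card_parts_classPartition_le_one : #(classPartition r).parts ≤ 1 ↔ r = ⊤ := by
  simp only [card_le_one, mem_parts_classPartition, forall_exists_index, forall_apply_eq_imp_iff,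
    part_classPartition_eq_iff, Setoid.eq_top_iff]

theorem classPartition_bot : classPartition (⊥ : Setoid α) = ⊥ := by
  ext c
  rw [mem_parts_classPartition, Finpartition.mem_bot_iff]
  simp only [mem_univ, true_and]
  refine exists_congr fun x => ?_
  have hx : (classPartition ⊥).part x = {x} := by
    ext y
    rw [mem_part_classPartition, mem_singleton, Setoid.bot_def, eq_comm]
  rw [hx]

theorem part_mergeClasses_of_related (hx : r a x ∨ r b x) :
    (classPartition (mergeClasses r a b)).part x =
      (classPartition r).part a ∪ (classPartition r).part b := by
  ext y
  simp only [mem_part_classPartition, mem_union, mergeClasses_apply, hx, true_and,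
    or_iff_right_iff_imp]
  exact fun hxy => hx.imp (r.trans · hxy) (r.trans · hxy)

theorem part_mergeClasses_of_not_related (hx : ¬ (r a x ∨ r b x)) :
    (classPartition (mergeClasses r a b)).part x = (classPartition r).part x := by
  ext y
  simp only [mem_part_classPartition, mergeClasses_apply, hx, false_and, or_false]

theorem parts_mergeClasses (r : Setoid α) (a b : α) :
    (classPartition (mergeClasses r a b)).parts =
      insert ((classPartition r).part a ∪ (classPartition r).part b)
        (((classPartition r).parts.erase ((classPartition r).part a)).erase
          ((classPartition r).part b)) := by
  ext c
  simp only [mem_insert, mem_erase, mem_parts_classPartition]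
  constructor
  · rintro ⟨x, rfl⟩
    by_cases hx : r a x ∨ r b x
    · exact .inl (part_mergeClasses_of_related hx)
    · rw [part_mergeClasses_of_not_related hx]
      rw [not_or, ← part_classPartition_eq_iff, ← part_classPartition_eq_iff] at hx
      exact .inr ⟨Ne.symm hx.2, Ne.symm hx.1, x, rfl⟩
  · rintro (rfl | ⟨hb, ha, x, rfl⟩)
    · exact ⟨a, part_mergeClasses_of_related (.inl (r.refl a))⟩
    · rw [ne_comm, Ne, part_classPartition_eq_iff] at ha hb
      exact ⟨x, part_mergeClasses_of_not_related (not_or.2 ⟨ha, hb⟩)⟩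

theorem part_union_part_notMem_erase (r : Setoid α) (a b : α) :
    (classPartition r).part a ∪ (classPartition r).part b ∉
      ((classPartition r).parts.erase ((classPartition r).part a)).erase
        ((classPartition r).part b) := by
  intro h
  obtain ⟨hne, hmem⟩ := mem_erase.1 (mem_erase.1 h).2
  have ha := mem_union_left ((classPartition r).part b)
    ((classPartition r).mem_part_self.2 (mem_univ a))
  exact hne ((classPartition r).part_eq_of_mem hmem ha).symm

theorem part_mem_erase_part (hab : ¬ r a b) :
    (classPartition r).part b ∈ (classPartition r).parts.erase ((classPartition r).part a) :=
  mem_erase.2 ⟨fun h => hab (part_classPartition_eq_iff.1 h.symm),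
    (classPartition r).part_mem.2 (mem_univ b)⟩

theorem card_parts_mergeClasses (hab : ¬ r a b) :
    #(classPartition (mergeClasses r a b)).parts + 1 = #(classPartition r).parts := by
  rw [parts_mergeClasses, card_insert_of_notMem (part_union_part_notMem_erase r a b),
    card_erase_add_one (part_mem_erase_part hab),
    card_erase_add_one ((classPartition r).part_mem.2 (mem_univ a))]

theorem prod_card_parts_mergeClasses {K : Type*} [Field K] [CharZero K] (hab : ¬ r a b) :
    ∏ c ∈ (classPartition (mergeClasses r a b)).parts, (#c : K) =
      (∏ c ∈ (classPartition r).parts, (#c : K)) *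
        ((#((classPartition r).part a) : K)⁻¹ + (#((classPartition r).part b) : K)⁻¹) := by
  have ha := card_part_ne_zero (K := K) (classPartition r) (mem_univ a)
  have hb := card_part_ne_zero (K := K) (classPartition r) (mem_univ b)
  have hmema := (classPartition r).part_mem.2 (mem_univ a)
  have hmemb := part_mem_erase_part hab
  have hdisj : Disjoint ((classPartition r).part a) ((classPartition r).part b) :=
    (classPartition r).disjoint hmema (mem_of_mem_erase hmemb) (ne_of_mem_erase hmemb).symm
  rw [parts_mergeClasses, prod_insert (part_union_part_notMem_erase r a b),
    card_union_of_disjoint hdisj, ← mul_prod_erase _ _ hmema, ← mul_prod_erase _ _ hmemb]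
  push_cast
  field_simp
  ring

end ClassPartition

section Swap

variable {α : Type*} [DecidableEq α]

theorem swap_eq_swap_iff {a b x y : α} (hxy : x ≠ y) :
    swap x y = swap a b ↔ x = a ∧ y = b ∨ x = b ∧ y = a := by
  constructor
  · intro h
    have hx : swap a b x = y := by rw [← h, swap_apply_left]
    rw [swap_apply_def] at hx
    split_ifs at hx with hxa hxb
    · exact .inl ⟨hxa, hx.symm⟩
    · exact .inr ⟨hxb, hx.symm⟩
    · exact absurd hx hxy
  · rintro (⟨rfl, rfl⟩ | ⟨rfl, rfl⟩)
    · rfl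
    · exact swap_comm _ _

theorem isSwap_conj_iff {f g : Perm α} : (g * f * g⁻¹).IsSwap ↔ f.IsSwap := by
  constructor
  · rintro ⟨a, b, hab, h⟩
    refine ⟨g⁻¹ a, g⁻¹ b, g⁻¹.injective.ne hab, ?_⟩
    rw [swap_apply_apply, ← h]
    group
  · rintro ⟨a, b, hab, rfl⟩
    exact ⟨g a, g b, g.injective.ne hab, (swap_apply_apply g a b).symm⟩

theorem sum_sum_compl_singleton_swap [Fintype α] {M : Type*} [AddCommMonoid M] (F : Perm α → M) :
    ∑ a, ∑ b ∈ {a}ᶜ, F (swap a b) = 2 • ∑ s with s.IsSwap, F s := by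
  have hmaps : ∀ p ∈ (univ : Finset α).offDiag, swap p.1 p.2 ∈ ({s | s.IsSwap} : Finset _) :=
    fun p hp => mem_filter.2 ⟨mem_univ _, p.1, p.2, (mem_offDiag.1 hp).2.2, rfl⟩
  have hpairs : ∑ a, ∑ b ∈ {a}ᶜ, F (swap a b) = ∑ p ∈ univ.offDiag, F (swap p.1 p.2) :=
    (sum_finset_product univ.offDiag univ (fun a : α => {a}ᶜ) (by simp [eq_comm])
      (f := fun p => F (swap p.1 p.2))).symm
  rw [hpairs, ← sum_fiberwise_of_maps_to hmaps, ← sum_nsmul]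
  refine sum_congr rfl fun s hs => ?_
  obtain ⟨a, b, hab, rfl⟩ := (mem_filter.1 hs).2
  have hfiber : {p ∈ (univ : Finset α).offDiag | swap p.1 p.2 = swap a b} = {(a, b), (b, a)} := by
    ext ⟨x, y⟩
    simp only [mem_filter, mem_offDiag, mem_univ, true_and, mem_insert, mem_singleton,
      Prod.mk.injEq]
    constructor
    · rintro ⟨hxy, h⟩
      exact (swap_eq_swap_iff hxy).1 h
    · intro h
      have hxy : x ≠ y := by rcases h with ⟨rfl, rfl⟩ | ⟨rfl, rfl⟩ <;> simp [hab, hab.symm]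
      exact ⟨hxy, (swap_eq_swap_iff hxy).2 h⟩
  rw [sum_congr rfl fun p hp => by rw [(mem_filter.1 hp).2], hfiber, sum_const,
    card_pair (by simp [hab])]

end Swap

section Completions

variable {α : Type*} [Fintype α] [DecidableEq α] {m : ℕ} {f : Perm α}

/-- The partition of `α` into the cycles of `f`, fixed points being cycles of length one. -/
noncomputable def cyclePartition (f : Perm α) : Finpartition (univ : Finset α) :=
  classPartition (SameCycle.setoid f)

theorem mem_part_cyclePartition {x y : α} : y ∈ (cyclePartition f).part x ↔ f.SameCycle x y :=
  mem_part_classPartition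

theorem cyclePartition_one : cyclePartition (1 : Perm α) = ⊥ := by
  have hbot : SameCycle.setoid (1 : Perm α) = ⊥ :=
    le_bot_iff.1 (sameCycleSetoid_le_iff.2 fun _ => rfl)
  rw [cyclePartition, hbot, classPartition_bot]

theorem card_parts_cyclePartition_le_one :
    #(cyclePartition f).parts ≤ 1 ↔ f.IsCycleOn Set.univ :=
  card_parts_classPartition_le_one.trans isCycleOn_univ_iff.symm

theorem card_parts_cyclePartition_le_mul_swap {a b : α} (hab : f.SameCycle a b) :
    #(cyclePartition f).parts ≤ #(cyclePartition (f * swap a b)).parts :=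
  card_parts_classPartition_anti (sameCycleSetoid_mul_swap_le_of_sameCycle hab)

theorem card_parts_cyclePartition_mul_swap {a b : α} (hab : ¬ f.SameCycle a b) :
    #(cyclePartition (f * swap a b)).parts + 1 = #(cyclePartition f).parts := by
  rw [cyclePartition, sameCycleSetoid_mul_swap hab]
  exact card_parts_mergeClasses hab

theorem prod_card_parts_cyclePartition_mul_swap {K : Type*} [Field K] [CharZero K] {a b : α}
    (hab : ¬ f.SameCycle a b) :
    ∏ c ∈ (cyclePartition (f * swap a b)).parts, (#c : K) =
      (∏ c ∈ (cyclePartition f).parts, (#c : K)) *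
        ((#((cyclePartition f).part a) : K)⁻¹ + (#((cyclePartition f).part b) : K)⁻¹) := by
  rw [cyclePartition, sameCycleSetoid_mul_swap hab]
  exact prod_card_parts_mergeClasses hab

theorem card_parts_cyclePartition_le_mul_prod {l : List (Perm α)} (hl : ∀ s ∈ l, s.IsSwap) :
    #(cyclePartition f).parts ≤ #(cyclePartition (f * l.prod)).parts + l.length := by
  induction l generalizing f with
  | nil => simp
  | cons s l ih =>
    obtain ⟨⟨a, b, -, rfl⟩, htail⟩ := List.forall_mem_cons.1 hl
    have hrest := ih (f := f * swap a b) htail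
    rw [List.prod_cons, ← mul_assoc, List.length_cons]
    by_cases hab : f.SameCycle a b
    · have := card_parts_cyclePartition_le_mul_swap hab
      lia
    · have := card_parts_cyclePartition_mul_swap hab
      lia

/-- The `m`-tuples of transpositions completing `f` to a full cycle by multiplication on the
right. Fullness is expressed by `IsCycleOn Set.univ`, which unlike `IsCycle` covers a single fixed
point. -/
noncomputable def swapCompletions (m : ℕ) (f : Perm α) : Finset (Fin m → Perm α) :=
  {t | (∀ i, (t i).IsSwap) ∧ (f * (List.ofFn t).prod).IsCycleOn Set.univ}

theorem card_swapCompletions_zero (hf : f.IsCycleOn Set.univ) : #(swapCompletions 0 f) = 1 := by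
  simp [swapCompletions, hf]

theorem card_swapCompletions_succ (m : ℕ) (f : Perm α) :
    #(swapCompletions (m + 1) f) = ∑ s with s.IsSwap, #(swapCompletions m (f * s)) := by
  rw [← card_sigma]
  refine card_equiv ((Fin.consEquiv fun _ => Perm α).symm.trans (Equiv.sigmaEquivProd _ _).symm)
    fun t => ?_
  simp [swapCompletions, Fin.forall_fin_succ, List.ofFn_succ, Fin.tail_def, mul_assoc, and_assoc]

theorem swapCompletions_eq_empty (h : m + 1 < #(cyclePartition f).parts) :
    swapCompletions m f = ∅ := by
  refine filter_eq_empty_iff.2 fun t _ ⟨hswap, hcycle⟩ => ?_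
  have hle := card_parts_cyclePartition_le_mul_prod (f := f) ((List.forall_mem_ofFn_iff).2 hswap)
  have hone := card_parts_cyclePartition_le_one.2 hcycle
  rw [List.length_ofFn] at hle
  lia

theorem two_mul_card_swapCompletions_succ (h : m + 1 < #(cyclePartition f).parts) :
    2 * #(swapCompletions (m + 1) f) =
      ∑ a, ∑ b ∈ univ \ (cyclePartition f).part a, #(swapCompletions m (f * swap a b)) := by
  rw [card_swapCompletions_succ, ← smul_eq_mul,
    ← sum_sum_compl_singleton_swap fun s => #(swapCompletions m (f * s))]
  refine sum_congr rfl fun a _ => (sum_subset (fun b hb => ?_) fun b _ hb => ?_).symm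
  · rw [mem_compl, mem_singleton]
    rintro rfl
    exact (mem_sdiff.1 hb).2 ((cyclePartition f).mem_part_self.2 (mem_univ b))
  · have hab : f.SameCycle a b := by simpa [mem_part_cyclePartition] using hb
    have hcard := card_parts_cyclePartition_le_mul_swap hab
    rw [swapCompletions_eq_empty (by lia), card_empty]

theorem card_mul_card_swapCompletions (h : #(cyclePartition f).parts = m + 1) :
    (Fintype.card α * #(swapCompletions m f) : ℚ) =
      m ! * (Fintype.card α : ℚ) ^ m * ∏ c ∈ (cyclePartition f).parts, (#c : ℚ) := by
  induction m generalizing f with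
  | zero =>
    obtain ⟨c, hc⟩ := card_eq_one.1 h
    have hcard : #c = Fintype.card α := by simpa [hc] using (cyclePartition f).sum_card_parts
    rw [card_swapCompletions_zero (card_parts_cyclePartition_le_one.1 h.le), hc, prod_singleton,
      hcard]
    simp
  | succ m ih =>
    set P := cyclePartition f with hP
    set n : ℚ := (Fintype.card α : ℚ)
    have hmerge : ∀ a, ∀ b ∈ univ \ P.part a, n * #(swapCompletions m (f * swap a b)) =
        m ! * n ^ m * (∏ c ∈ P.parts, (#c : ℚ)) *
          ((#(P.part a) : ℚ)⁻¹ + (#(P.part b) : ℚ)⁻¹) := by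
      intro a b hb
      have hab : ¬ f.SameCycle a b := mt mem_part_cyclePartition.2 (mem_sdiff.1 hb).2
      have hcard := card_parts_cyclePartition_mul_swap hab
      rw [ih (by lia), prod_card_parts_cyclePartition_mul_swap hab, ← mul_assoc]
    have hdouble := calc
      2 * (n * #(swapCompletions (m + 1) f))
        = n * (2 * #(swapCompletions (m + 1) f) : ℕ) := by push_cast; ring
      _ = ∑ a, ∑ b ∈ univ \ P.part a, n * #(swapCompletions m (f * swap a b)) := by
          rw [two_mul_card_swapCompletions_succ (by lia)]
          simp only [Nat.cast_sum, mul_sum, hP]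
      _ = ∑ a, ∑ b ∈ univ \ P.part a, m ! * n ^ m * (∏ c ∈ P.parts, (#c : ℚ)) *
            ((#(P.part a) : ℚ)⁻¹ + (#(P.part b) : ℚ)⁻¹) :=
          sum_congr rfl fun a _ => sum_congr rfl (hmerge a)
      _ = m ! * n ^ m * (∏ c ∈ P.parts, (#c : ℚ)) * (2 * (n * (m + 1))) := by
          simp only [← mul_sum]
          rw [sum_sum_sdiff_part_inv_add_inv, card_univ, h]
          push_cast
          ring
    rw [Nat.factorial_succ]
    push_cast
    linear_combination hdouble / 2

theorem card_swapCompletions_one (h : Fintype.card α = m + 1) :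
    #(swapCompletions m (1 : Perm α)) * (m + 1) = m ! * (m + 1) ^ m := by
  have hprod : ∏ c ∈ (⊥ : Finpartition (univ : Finset α)).parts, (#c : ℚ) = 1 := by
    refine prod_eq_one fun c hc => ?_
    obtain ⟨x, -, rfl⟩ := Finpartition.mem_bot_iff.1 hc
    simp
  have hcount := card_mul_card_swapCompletions (f := (1 : Perm α)) (m := m)
    (by rw [cyclePartition_one, Finpartition.card_bot, card_univ, h])
  rw [cyclePartition_one, hprod, h, mul_one, mul_comm] at hcount
  exact_mod_cast hcount

end Completions

section FullCycles

variable {α : Type*} [Fintype α] [DecidableEq α] {f g : Perm α}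

theorem isCycleOn_univ_iff_cycleType_eq [Nontrivial α] :
    f.IsCycleOn Set.univ ↔ f.cycleType = {Fintype.card α} := by
  constructor
  · intro hf
    have hcycle : f.IsCycle :=
      isCycle_iff_exists_isCycleOn.2 ⟨Set.univ, Set.nontrivial_univ, hf, fun x _ => Set.mem_univ x⟩
    have hsupp : f.support = univ := by
      ext x
      simp [hf.apply_ne Set.nontrivial_univ (Set.mem_univ x)]
    rw [hcycle.cycleType, hsupp, card_univ]
  · intro hf
    have hcycle : f.IsCycle := card_cycleType_eq_one.1 (by rw [hf, Multiset.card_singleton])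
    rw [hcycle.cycleType, Multiset.singleton_inj, card_eq_iff_eq_univ] at hf
    have hon := hcycle.isCycleOn
    rwa [← coe_support_eq_set_support, hf, coe_univ] at hon

theorem isConj_of_isCycleOn_univ {α : Type*} [Finite α] {f g : Perm α}
    (hf : f.IsCycleOn Set.univ) (hg : g.IsCycleOn Set.univ) : IsConj f g := by
  have := Fintype.ofFinite α
  rcases subsingleton_or_nontrivial α with _ | _
  · rw [Subsingleton.elim f g]
  · rw [isCycleOn_univ_iff_cycleType_eq] at hf hg
    exact isConj_iff_cycleType_eq.2 (hf.trans hg.symm)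

variable (α) in
theorem card_isCycleOn_univ :
    #{g : Perm α | g.IsCycleOn Set.univ} = (Fintype.card α - 1)! := by
  rcases subsingleton_or_nontrivial α with _ | _
  · have hcard : Fintype.card α ≤ 1 := Fintype.card_le_one_iff_subsingleton.2 ‹_›
    simp [isCycleOn_of_subsingleton, Nat.sub_eq_zero_of_le hcard]
  · simp only [isCycleOn_univ_iff_cycleType_eq]
    rw [card_of_cycleType_singleton Fintype.one_lt_card le_rfl, Nat.choose_self, mul_one]

/-- The factorizations of `f` into a product of `m` transpositions, recorded as `m`-tuples. -/
noncomputable def swapFactorizations (m : ℕ) (f : Perm α) : Finset (Fin m → Perm α) :=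
  {t | (∀ i, (t i).IsSwap) ∧ (List.ofFn t).prod = f}

theorem card_swapFactorizations_eq_of_isConj (m : ℕ) (h : IsConj f g) :
    #(swapFactorizations m f) = #(swapFactorizations m g) := by
  obtain ⟨c, rfl⟩ := isConj_iff.1 h
  refine card_equiv (Equiv.piCongrRight fun _ => (MulAut.conj c).toEquiv) fun t => ?_
  have hprod : (List.ofFn fun i => c * t i * c⁻¹).prod = c * (List.ofFn t).prod * c⁻¹ := by
    simpa only [List.map_ofFn] using! (map_list_prod (MulAut.conj c) (List.ofFn t)).symm
  simp only [swapFactorizations, mem_filter, mem_univ, true_and]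
  change _ ↔ (∀ i, (c * t i * c⁻¹).IsSwap) ∧ (List.ofFn fun i => c * t i * c⁻¹).prod = c * f * c⁻¹
  simp only [isSwap_conj_iff, hprod, mul_left_inj, mul_right_inj]

theorem card_swapCompletions_one_eq_mul (m : ℕ) (hf : f.IsCycleOn Set.univ) :
    #(swapCompletions m (1 : Perm α)) = (Fintype.card α - 1)! * #(swapFactorizations m f) := by
  have hmaps : ∀ t ∈ swapCompletions m (1 : Perm α),
      (List.ofFn t).prod ∈ ({g | g.IsCycleOn Set.univ} : Finset (Perm α)) := by
    simp +contextual [swapCompletions]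
  rw [card_eq_sum_card_fiberwise hmaps, ← card_isCycleOn_univ, ← smul_eq_mul, ← sum_const]
  refine sum_congr rfl fun g hg => ?_
  have hg : g.IsCycleOn Set.univ := (mem_filter.1 hg).2
  rw [card_swapFactorizations_eq_of_isConj m (isConj_of_isCycleOn_univ hf hg)]
  congr 1
  ext t
  simp only [swapCompletions, swapFactorizations, mem_filter, mem_univ, true_and, one_mul]
  constructor
  · exact fun ⟨⟨hswap, _⟩, hprod⟩ => ⟨hswap, hprod⟩
  · rintro ⟨hswap, rfl⟩
    exact ⟨⟨hswap, hg⟩, rfl⟩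

theorem hurwitz_count_transposition_factorizations_general {m : ℕ} (hm : Fintype.card α = m + 1)
    (hf : f.IsCycleOn Set.univ) :
    Nat.card {t : Fin m → Perm α // (∀ i, (t i).IsSwap) ∧ (List.ofFn t).prod = f} =
      (m + 1) ^ (m - 1) := by
  have hcount := card_swapCompletions_one hm
  rw [card_swapCompletions_one_eq_mul m hf, hm, Nat.add_sub_cancel, mul_assoc] at hcount
  have hmul : #(swapFactorizations m f) * (m + 1) = (m + 1) ^ m :=
    Nat.eq_of_mul_eq_mul_left m.factorial_pos hcount
  rw [Nat.card_eq_fintype_card, Fintype.card_subtype]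
  change #(swapFactorizations m f) = _
  cases m with
  | zero => simpa using hmul
  | succ m => exact Nat.eq_of_mul_eq_mul_right m.succ.succ_pos hmul

theorem isCycleOn_univ_finRotate (n : ℕ) : (finRotate n).IsCycleOn Set.univ := by
  rcases subsingleton_or_nontrivial (Fin n) with _ | h
  · exact isCycleOn_of_subsingleton _ _
  · rw [isCycleOn_univ_iff_cycleType_eq, cycleType_finRotate_of_le (Fin.nontrivial_iff_two_le.1 h),
      Fintype.card_fin]

end FullCycles

/-- **Hurwitz's theorem.** In the symmetric group `S_n` (for `n ≥ 2`), the number of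
`(n-1)`-tuples of transpositions whose product is the long cycle `(1 2 ⋯ n)` is `n^(n-2)`. -/
theorem hurwitz_count_transposition_factorizations (n : ℕ) (hn : 2 ≤ n) :
    Nat.card {t : Fin (n - 1) → Equiv.Perm (Fin n) //
        (∀ i, (t i).IsSwap) ∧ (List.ofFn t).prod = finRotate n}
      = n ^ (n - 2) := by
  obtain ⟨k, rfl⟩ := Nat.exists_eq_add_of_le' hn
  exact hurwitz_count_transposition_factorizations_general (Fintype.card_fin _)
    (isCycleOn_univ_finRotate _)
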